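/- Let n ≥ 4 be an integer and let Λ ⊂ ℝ² be a closed set that is 2-periodic with respect to the second variable. For 2 ≤ k ≤ n−2 define Π̃^{k*}_{ne}(Λ) = Π^{k*}_{su}(Λ) ∩ {ξ ∈ Π^k(Λ) : τ ∈ P^{Π^k(Λ),ξ}_2}, where τ(ξ) = ∏_{p=2}^{k} ∏_{q=1}^{p−1} (e^{πiη_p} − e^{πiη_q})² with η_1 < ⋯ < η_k the elements of Img(ξ). Then for every k with 2 ≤ k ≤ n−2, Π^{k*}_{ne}(Λ) ⊂ Π̃^{k*}_{ne}(Λ). -/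

import Mathlib

open MeasureTheory Complex

/-- Fourier transform with the convention `f̂(ξ) = ∫ e^{πixξ} f(x) dx`. -/
noncomputable def FT (f : ℝ → ℂ) (ξ : ℝ) : ℂ :=
  ∫ x : ℝ, Complex.exp (Real.pi * Complex.I * x * ξ) * f x

/-- `e^{πiη}`. -/
noncomputable def cexpEta (η : ℝ) : ℂ := Complex.exp (Real.pi * Complex.I * η)

/-- `Λ` is 2-periodic with respect to the second variable. -/
def Periodic2 (Λ : Set (ℝ × ℝ)) : Prop :=
  ∀ ξ η : ℝ, (ξ, η) ∈ Λ ↔ (ξ, η + 2) ∈ Λ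

/-- The projection `Π(Λ)` of `Λ` on the x-axis. -/
def proj (Λ : Set (ℝ × ℝ)) : Set ℝ := {ξ | ∃ η : ℝ, (ξ, η) ∈ Λ}

/-- `Img(ξ) = {η ∈ [0,2) : (ξ,η) ∈ Λ}`. -/
def Img (Λ : Set (ℝ × ℝ)) (ξ : ℝ) : Set ℝ := {η | η ∈ Set.Ico (0 : ℝ) 2 ∧ (ξ, η) ∈ Λ}

/-- `Π^k(Λ)` for `k < n`: points of `Π(Λ)` whose `Img` has exactly `k` elements. -/
def projExact (Λ : Set (ℝ × ℝ)) (k : ℕ) : Set ℝ :=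
  {ξ | ξ ∈ proj Λ ∧ (Img Λ ξ).encard = k}

/-- `Π^n(Λ)`: points of `Π(Λ)` whose `Img` has at least `n` elements. -/
def projAtLeast (Λ : Set (ℝ × ℝ)) (n : ℕ) : Set ℝ :=
  {ξ | ξ ∈ proj Λ ∧ (n : ℕ∞) ≤ (Img Λ ξ).encard}

/-- `ψ ∈ P^{E,ξ}_l` : there are an open interval `I ∋ ξ` and `φ_1,…,φ_{l-1} ∈ L¹(ℝ)` with
`φ̂_1 + φ̂_2 ψ + ⋯ + φ̂_{l-1} ψ^{l-2} + ψ^{l-1} = 0` on `I ∩ E`. -/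
def Pmem (E : Set ℝ) (ξ : ℝ) (l : ℕ) (ψ : ℝ → ℂ) : Prop :=
  ∃ a b : ℝ, ξ ∈ Set.Ioo a b ∧
    ∃ φ : Fin (l - 1) → ℝ → ℂ, (∀ i, Integrable (φ i)) ∧
      ∀ x ∈ Set.Ioo a b ∩ E,
        (∑ i : Fin (l - 1), FT (φ i) x * ψ x ^ (i : ℕ)) + ψ x ^ (l - 1) = 0

/-- `Π^{1*}(Λ)`: those `ξ ∈ Π^1(Λ)` such that `χ ∈ P^{Π^1(Λ),ξ}_n`, where
`χ(ξ') = e^{πiη}` with `η` the unique element of `Img(ξ')`. -/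
def projOneStar (Λ : Set (ℝ × ℝ)) (n : ℕ) : Set ℝ :=
  {ξ | ξ ∈ projExact Λ 1 ∧ ∃ χ : ℝ → ℂ,
    (∀ ξ' ∈ projExact Λ 1, ∀ η ∈ Img Λ ξ', χ ξ' = cexpEta η) ∧
    Pmem (projExact Λ 1) ξ n χ}

/-- `Π^{k*}_{su}(Λ)`. -/
def projStarSu (Λ : Set (ℝ × ℝ)) (n k : ℕ) : Set ℝ :=
  {ξ | ξ ∈ projExact Λ k ∧ ∃ a b : ℝ, ξ ∈ Set.Ioo a b ∧
    ∃ φ : Fin (n - 1) → ℝ → ℂ, (∀ i, Integrable (φ i)) ∧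
      ∀ ξ' ∈ Set.Ioo a b ∩ projExact Λ k, ∀ η ∈ Img Λ ξ',
        (∑ i : Fin (n - 1), FT (φ i) ξ' * cexpEta η ^ (i : ℕ)) = -(cexpEta η ^ (n - 1))}

/-- `Π^{k*}_{ne}(Λ)` for `k ≥ 2`. -/
def projStarNe (Λ : Set (ℝ × ℝ)) (k : ℕ) : Set ℝ :=
  {ξ | ξ ∈ projExact Λ k ∧ ∃ a b : ℝ, ξ ∈ Set.Ioo a b ∧
    ∃ φ : Fin k → ℝ → ℂ, (∀ i, Integrable (φ i)) ∧
      ∀ ξ' ∈ Set.Ioo a b ∩ projExact Λ k, ∀ η ∈ Img Λ ξ',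
        (∑ i : Fin k, FT (φ i) ξ' * cexpEta η ^ (i : ℕ)) = -(cexpEta η ^ k)}

/-- `(Γ, Λ)` with `Γ = ℝ × {0,…,n-1}` is a Heisenberg uniqueness pair: every admissible
measure `μ = Σ_m (x ↦ (x,m))_*(f_m dx)` (with each `f_m ∈ L¹(ℝ)`) whose Fourier transform
`μ̂(ξ,η) = Σ_m e^{mπiη} f̂_m(ξ)` vanishes on `Λ` must be zero, i.e. each `f_m = 0` a.e. -/
def IsHUP (n : ℕ) (Λ : Set (ℝ × ℝ)) : Prop :=
  ∀ f : Fin n → ℝ → ℂ, (∀ m, Integrable (f m)) →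
    (∀ ξ η : ℝ, (ξ, η) ∈ Λ → ∑ m : Fin n, cexpEta η ^ (m : ℕ) * FT (f m) ξ = 0) →
    ∀ m, f m =ᵐ[volume] (0 : ℝ → ℂ)

/-- `τ` agrees on `Π^k(Λ)` with `ξ ↦ ∏_{q<p} (e^{πiη_p} - e^{πiη_q})²`, where
`η_1 < ⋯ < η_k` enumerate `Img(ξ)`. -/
def tauSpec (Λ : Set (ℝ × ℝ)) (k : ℕ) (τ : ℝ → ℂ) : Prop :=
  ∀ ξ' ∈ projExact Λ k, ∀ η : Fin k → ℝ, StrictMono η → Set.range η = Img Λ ξ' →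
    τ ξ' = ∏ p : Fin k, ∏ q : Fin k,
      if (q : ℕ) < (p : ℕ) then (cexpEta (η p) - cexpEta (η q)) ^ 2 else 1

/-- `Π̃^{k*}_{ne}(Λ) = Π^{k*}_{su}(Λ) ∩ {ξ ∈ Π^k(Λ) : τ ∈ P^{Π^k(Λ),ξ}_2}`. -/
def projStarNeTilde (Λ : Set (ℝ × ℝ)) (n k : ℕ) : Set ℝ :=
  projStarSu Λ n k ∩
    {ξ | ξ ∈ projExact Λ k ∧ ∃ τ : ℝ → ℂ, tauSpec Λ k τ ∧ Pmem (projExact Λ k) ξ 2 τ}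

lemma FT_eq_fourier (f : ℝ → ℂ) (ξ : ℝ) :
    FT f ξ = FourierTransform.fourier f (-ξ / 2) := by
  rw [Real.fourier_eq', FT]
  congr 1
  ext x
  rw [smul_eq_mul]
  congr 2
  simp
  ring

lemma FT_add {f g : ℝ → ℂ} (hf : Integrable f) (hg : Integrable g) (ξ : ℝ) :
    FT (f + g) ξ = FT f ξ + FT g ξ := by
  have h : ∀ {f : ℝ → ℂ}, Integrable f →
      Integrable (fun x : ℝ => Complex.exp (Real.pi * Complex.I * x * ξ) * f x) := by
    intro f hf
    refine hf.bdd_mul (c := 1) (by fun_prop) (Filter.Eventually.of_forall fun x => ?_)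
    have : (Real.pi * Complex.I * x * ξ : ℂ) = ((Real.pi * x * ξ : ℝ) : ℂ) * Complex.I := by
      push_cast; ring
    rw [this, Complex.norm_exp_ofReal_mul_I]
  unfold FT
  rw [← integral_add (h hf) (h hg)]
  simp [mul_add]

lemma FT_smul (c : ℂ) (f : ℝ → ℂ) (ξ : ℝ) :
    FT (fun x => c * f x) ξ = c * FT f ξ := by
  unfold FT
  rw [← integral_const_mul]
  congr 1
  ext x
  ring

lemma exists_FT_mul {f g : ℝ → ℂ} (hf : Integrable f) (hg : Integrable g) :
    ∃ h : ℝ → ℂ, Integrable h ∧ ∀ ξ, FT h ξ = FT f ξ * FT g ξ := by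
  refine ⟨_, hf.integrable_convolution (ContinuousLinearMap.mul ℂ ℂ) hg, fun ξ => ?_⟩
  rw [FT_eq_fourier, FT_eq_fourier, FT_eq_fourier, Real.fourier_mul_convolution_eq hf hg]

lemma exists_FT_one (a b : ℝ) :
    ∃ h : ℝ → ℂ, Integrable h ∧ ∀ ξ ∈ Set.Ioo a b, FT h ξ = 1 := by
  let B : ContDiffBump (0 : ℝ) := ⟨|a| + |b| + 1, |a| + |b| + 2, by positivity, by linarith⟩
  have h1 : HasCompactSupport (fun x => ((B x : ℝ) : ℂ)) :=
    B.hasCompactSupport.comp_left (g := fun x : ℝ => (x : ℂ)) (by simp)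
  have h2 : ContDiff ℝ (⊤ : ℕ∞) (fun x => ((B x : ℝ) : ℂ)) :=
    Complex.ofRealCLM.contDiff.comp B.contDiff
  let S : SchwartzMap ℝ ℂ := h1.toSchwartzMap h2
  refine ⟨(FourierTransformInv.fourierInv S : SchwartzMap ℝ ℂ), SchwartzMap.integrable _, ?_⟩
  intro ξ hξ
  rw [FT_eq_fourier, ← SchwartzMap.fourier_coe]
  simp only [FourierTransform.fourier_fourierInv_eq]
  change ((B (-ξ / 2) : ℝ) : ℂ) = 1
  rw [B.one_of_mem_closedBall]
  · simp
  · rw [mem_closedBall_zero_iff, Real.norm_eq_abs]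
    change _ ≤ |a| + |b| + 1
    have := hξ.1
    have := hξ.2
    have := abs_nonneg a
    have := abs_nonneg b
    have := le_abs_self b
    have := neg_abs_le a
    rw [abs_le]
    constructor <;> linarith

noncomputable def locAlg (a b : ℝ) : Subalgebra ℂ (ℝ → ℂ) where
  carrier := {g | ∃ φ : ℝ → ℂ, Integrable φ ∧ ∀ x ∈ Set.Ioo a b, FT φ x = g x}
  mul_mem' := by
    rintro f g ⟨φ, hφ, h⟩ ⟨ψ, hψ, h'⟩
    obtain ⟨χ, hχ, h''⟩ := exists_FT_mul hφ hψ
    exact ⟨χ, hχ, fun x hx => by rw [h'', h x hx, h' x hx]; rfl⟩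
  add_mem' := by
    rintro f g ⟨φ, hφ, h⟩ ⟨ψ, hψ, h'⟩
    exact ⟨φ + ψ, hφ.add hψ, fun x hx => by rw [FT_add hφ hψ, h x hx, h' x hx]; rfl⟩
  algebraMap_mem' := by
    intro c
    obtain ⟨φ, hφ, h⟩ := exists_FT_one a b
    exact ⟨_, hφ.const_mul c, fun x hx => by rw [FT_smul, h x hx]; simp⟩

/-- The discriminant as a polynomial in the elementary symmetric functions. -/
lemma exists_disc_poly (k : ℕ) : ∃ Q : MvPolynomial (Fin k) ℂ, ∀ z : Fin k → ℂ,
    MvPolynomial.aeval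
      (fun i : Fin k => (Multiset.map z Finset.univ.val).esymm ((i : ℕ) + 1)) Q =
    ∏ p : Fin k, ∏ q : Fin k,
      if (q : ℕ) < (p : ℕ) then (z p - z q) ^ 2 else 1 := by
  let D : MvPolynomial (Fin k) ℂ :=
    (Matrix.vandermonde (fun i : Fin k => (MvPolynomial.X i : MvPolynomial (Fin k) ℂ))).det ^ 2
  have hD : D.IsSymmetric := by
    intro e
    simp only [D, map_pow]
    rw [AlgHom.map_det]
    have : (MvPolynomial.rename e).mapMatrix
        (Matrix.vandermonde (fun i : Fin k => (MvPolynomial.X i : MvPolynomial (Fin k) ℂ))) =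
        (Matrix.vandermonde
          (fun i : Fin k => (MvPolynomial.X i : MvPolynomial (Fin k) ℂ))).submatrix e id := by
      ext1 i j
      simp [Matrix.vandermonde_apply]
    rw [this, Matrix.det_permute, mul_pow]
    have h2 : (((Equiv.Perm.sign e : ℤ) : MvPolynomial (Fin k) ℂ)) ^ 2 = 1 := by
      rcases Int.units_eq_one_or (Equiv.Perm.sign e) with h | h <;> simp [h]
    rw [h2, one_mul]
  obtain ⟨Q, hQ⟩ := MvPolynomial.esymmAlgHom_surjective (σ := Fin k) ℂ (n := k) (by simp)
    ⟨D, hD⟩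
  refine ⟨Q, fun z => ?_⟩
  have h1 := congrArg Subtype.val hQ
  rw [MvPolynomial.esymmAlgHom_apply] at h1
  have h2 := congrArg (MvPolynomial.aeval z) h1
  have h3 : MvPolynomial.aeval z (MvPolynomial.aeval
      (fun i : Fin k => MvPolynomial.esymm (Fin k) ℂ ((i : ℕ) + 1)) Q) =
      MvPolynomial.aeval
      (fun i : Fin k => (Multiset.map z Finset.univ.val).esymm ((i : ℕ) + 1)) Q := by
    rw [← AlgHom.comp_apply, MvPolynomial.comp_aeval]
    simp only [MvPolynomial.aeval_esymm_eq_multiset_esymm]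
  rw [← h3, h2]
  simp only [D, map_pow, Matrix.det_vandermonde, map_prod, map_sub, MvPolynomial.aeval_X]
  rw [Finset.prod_comm]
  simp only [← Finset.prod_pow]
  refine Finset.prod_congr rfl fun i _ => ?_
  rw [← Finset.prod_filter]
  refine Finset.prod_congr ?_ fun j _ => rfl
  ext j
  simp

lemma esymm_of_roots (k : ℕ) (c : Fin k → ℂ) (z : Fin k → ℂ) (hz : Function.Injective z)
    (h : ∀ j, (∑ i : Fin k, c i * z j ^ (i : ℕ)) = -(z j ^ k)) (i : Fin k) :
    (Multiset.map z Finset.univ.val).esymm ((i : ℕ) + 1) = (-1) ^ ((i : ℕ) + 1) * c i.rev := by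
  let P : Polynomial ℂ := ∑ i : Fin k, Polynomial.C (c i) * Polynomial.X ^ (i : ℕ)
  let R : Polynomial ℂ := (Multiset.map (fun t => Polynomial.X - Polynomial.C t)
    (Multiset.map z Finset.univ.val)).prod
  have hPd : P.degree < k := by
    refine Polynomial.degree_sum_fin_lt c
  have hcard : (Multiset.map z Finset.univ.val).card = k := by simp
  have hRm : R.Monic := Polynomial.monic_multiset_prod_of_monic _ _
    fun t _ => Polynomial.monic_X_sub_C t
  have hRd : R.degree = k := by
    have := Polynomial.natDegree_multiset_prod_X_sub_C_eq_card (Multiset.map z Finset.univ.val)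
    rw [Polynomial.degree_eq_natDegree hRm.ne_zero, this, hcard]
  have hPR : Polynomial.X ^ k + P = R := by
    apply Polynomial.eq_of_degree_sub_lt_of_eval_index_eq (s := Finset.univ) (v := z)
      (hz.injOn)
    · rw [Finset.card_univ, Fintype.card_fin]
      have hm : (Polynomial.X ^ k + P).degree = (k : WithBot ℕ) := by
        rw [Polynomial.degree_add_eq_left_of_degree_lt (by simpa using hPd)]
        simp
      have := Polynomial.degree_sub_lt (p := Polynomial.X ^ k + P) (q := R)
        (by rw [hm, hRd]) (fun h0 => by simp [h0] at hm)
        (by rw [hRm.leadingCoeff, (Polynomial.monic_X_pow_add hPd).leadingCoeff])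
      rwa [hm] at this
    · intro j _
      have hR0 : R.eval (z j) = 0 := by
        simp only [R, Polynomial.eval_multiset_prod]
        apply Multiset.prod_eq_zero
        simp
        exact ⟨j, by simp⟩
      rw [hR0]
      simp [P, Polynomial.eval_finsetSum, h j]
  have hc : R.coeff (i.rev : ℕ) = c i.rev := by
    rw [← hPR, Polynomial.coeff_add, Polynomial.coeff_X_pow, if_neg (by omega), zero_add]
    simp only [P, Polynomial.finsetSum_coeff, Polynomial.coeff_C_mul, Polynomial.coeff_X_pow,
      Fin.val_inj]
    simp
  have hv := Multiset.prod_X_sub_C_coeff (Multiset.map z Finset.univ.val) (k := (i.rev : ℕ))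
    (by rw [hcard]; omega)
  have he : k - (i.rev : ℕ) = (i : ℕ) + 1 := by
    rw [Fin.val_rev]; omega
  rw [hcard, he] at hv
  rw [← hc]
  change _ = _ * Polynomial.coeff (Multiset.prod _) _
  rw [hv, ← mul_assoc, ← mul_pow]
  simp

lemma cexpEta_injOn : Set.InjOn cexpEta (Set.Ico (0 : ℝ) 2) := by
  intro x hx y hy h
  unfold cexpEta at h
  rw [Complex.exp_eq_exp_iff_exists_int] at h
  obtain ⟨m, hm⟩ := h
  have hpi : (Real.pi * Complex.I : ℂ) ≠ 0 := by simp [Real.pi_ne_zero]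
  have h1 : (x : ℂ) = y + 2 * m := by
    apply mul_left_cancel₀ hpi
    rw [hm]; ring
  have h2 : x = y + 2 * m := by exact_mod_cast h1
  have h3 : (m : ℝ) < 1 := by linarith [hx.2, hy.1]
  have h4 : (-1 : ℝ) < m := by linarith [hx.1, hy.2]
  have h5 : m < 1 := by exact_mod_cast h3
  have h6 : -1 < m := by exact_mod_cast h4
  have : m = 0 := by omega
  simp [h2, this]

lemma exists_tau (Λ : Set (ℝ × ℝ)) (k : ℕ) : ∃ τ, tauSpec Λ k τ := by
  classical
  refine ⟨fun x => if h : ∃ η : Fin k → ℝ, StrictMono η ∧ Set.range η = Img Λ x then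
    ∏ p : Fin k, ∏ q : Fin k,
      if (q : ℕ) < (p : ℕ) then (cexpEta (h.choose p) - cexpEta (h.choose q)) ^ 2 else 1
    else 0, ?_⟩
  intro x _ η hη hr
  have h : ∃ η : Fin k → ℝ, StrictMono η ∧ Set.range η = Img Λ x := ⟨η, hη, hr⟩
  have he : h.choose = η :=
    (h.choose_spec.1.range_inj hη).1 (h.choose_spec.2.trans hr.symm)
  simp only [dif_pos h, he]

lemma exists_enum (Λ : Set (ℝ × ℝ)) (k : ℕ) (x : ℝ) (hx : x ∈ projExact Λ k) :
    ∃ η : Fin k → ℝ, StrictMono η ∧ Set.range η = Img Λ x := by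
  have hf : (Img Λ x).Finite := Set.finite_of_encard_eq_coe hx.2
  have hc : hf.toFinset.card = k := by
    have := hx.2
    rw [hf.encard_eq_coe_toFinset_card] at this
    exact_mod_cast this
  exact ⟨hf.toFinset.orderEmbOfFin hc, (hf.toFinset.orderEmbOfFin hc).strictMono, by simp⟩

theorem ne_subset_tilde (n : ℕ) (hn : 4 ≤ n) (Λ : Set (ℝ × ℝ))
    (hclosed : IsClosed Λ) (hper : Periodic2 Λ) :
    ∀ k : ℕ, 2 ≤ k → k ≤ n - 2 → projStarNe Λ k ⊆ projStarNeTilde Λ n k := by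
  intro k hk hkn ξ hξ
  obtain ⟨hξE, a, b, hab, φ, hφ, h⟩ := hξ
  refine ⟨⟨hξE, a, b, hab, ?_⟩, hξE, ?_⟩
  · obtain ⟨m, hm⟩ : ∃ m, n - 1 = m + k := ⟨n - 1 - k, by omega⟩
    rw [hm]
    refine ⟨Fin.append (fun _ => 0) φ, ?_, ?_⟩
    · intro i
      refine Fin.addCases (fun i => ?_) (fun i => ?_) i
      · rw [Fin.append_left]
        exact integrable_zero _ _ _
      · rw [Fin.append_right]
        exact hφ i
    · intro x hx η hη
      rw [Fin.sum_univ_add]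
      have h0 : FT 0 x = 0 := by simp [FT]
      simp only [Fin.append_left, Fin.append_right, h0, zero_mul, Finset.sum_const_zero, zero_add,
        Fin.val_natAdd, pow_add]
      have := h x hx η hη
      rw [← mul_neg, ← this, Finset.mul_sum]
      exact Finset.sum_congr rfl fun i _ => by ring
  · obtain ⟨τ, hτ⟩ := exists_tau Λ k
    refine ⟨τ, hτ, a, b, hab, ?_⟩
    obtain ⟨Q, hQ⟩ := exists_disc_poly k
    let g : Fin k → locAlg a b := fun i =>
      ⟨fun x => (-1) ^ ((i : ℕ) + 1) * FT (φ i.rev) x,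
        ⟨_, (hφ i.rev).const_mul ((-1) ^ ((i : ℕ) + 1)), fun x _ => by rw [FT_smul]⟩⟩
    obtain ⟨ψ, hψ, hψe⟩ := (MvPolynomial.aeval g Q).2
    refine ⟨fun _ => fun x => (-1) * ψ x, fun _ => hψ.const_mul _, ?_⟩
    rintro x ⟨hxI, hxE⟩
    obtain ⟨η, hη, hr⟩ := exists_enum Λ k x hxE
    have hmem : ∀ j, η j ∈ Img Λ x := fun j => hr ▸ Set.mem_range_self j
    have hinj : Function.Injective (fun j => cexpEta (η j)) := fun i j hij =>
      hη.injective (cexpEta_injOn (hmem i).1 (hmem j).1 hij)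
    have hes := esymm_of_roots k (fun i => FT (φ i) x) (fun j => cexpEta (η j)) hinj
      (fun j => h x ⟨hxI, hxE⟩ _ (hmem j))
    have hq := hQ (fun j => cexpEta (η j))
    simp only [hes] at hq
    have hev : ((MvPolynomial.aeval g Q : locAlg a b) : ℝ → ℂ) x =
        MvPolynomial.aeval (fun i : Fin k => (-1) ^ ((i : ℕ) + 1) * FT (φ i.rev) x) Q := by
      let ev : locAlg a b →ₐ[ℂ] ℂ := (Pi.evalAlgHom ℂ (fun _ : ℝ => ℂ) x).comp (locAlg a b).val
      change ev (MvPolynomial.aeval g Q) = _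
      rw [← AlgHom.comp_apply, MvPolynomial.comp_aeval]
      rfl
    have hfin : FT ψ x = τ x := by
      rw [hψe x hxI, hτ x hxE η hη hr, ← hq, ← hev]
    simp only [FT_smul, hfin]
    simp
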